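/- Let τ ⊆ ℂ be a compact set and let F : 𝔻 × τ → ℝ be a continuous function such that for every α ∈ τ the map z ↦ F(z, α) is continuously differentiable on the open unit disk 𝔻 (as a real map on ℝ² ≅ ℂ), and such that the map (z, α) ↦ D_z F(z, α) (the Fréchet derivative of F in the variable z over ℝ) is continuous on 𝔻 × τ. Then for every compact set K ⊆ 𝔻 and every δ > 0 there exists a continuously differentiable function g : ℂ × ℂ → ℝ such that sup_{z ∈ K, α ∈ τ} |F(z, α) − g(z, α)| < δ and sup_{z ∈ K, α ∈ τ} ‖D_z F(z, α) − D_z g(z, α)‖ < δ. -/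

import Mathlib

/-!
Since `F` is already `C¹` along each leaf, it suffices to interpolate between finitely many leaves.
By uniform continuity on the compact set `K ×ˢ τ`, there is `ε > 0` such that `F (·, α)` and
`F (·, β)` are `δ`-close in `C¹` on `K` whenever `α, β ∈ τ` are `ε`-close. Cover `τ` by finitely
many balls `ball β ε` with `β ∈ τ`, take a smooth partition of unity `ρ β` on `τ` subordinate to
them, and a bump function `χ` supported in the unit disk and equal to `1` near `K`. Then
`g (z, α) = ∑ β, ρ β α * (χ z * F z β)` works: for `z ∈ K` and `α ∈ τ`, the values of `g` and of
its leafwise derivative at `(z, α)` are convex combinations of those of `F` at points `(z, β)`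
with `dist α β < ε`, and balls are convex.
-/

open Metric

/-- Multiplying by a bump function supported in the open set `s` extends a `C¹` function on `s`
to a global one. -/
lemma contDiff_mul_of_tsupport_subset {χ f : ℂ → ℝ} {s : Set ℂ} (hs : IsOpen s)
    (hχ : ContDiff ℝ 1 χ) (hsupp : tsupport χ ⊆ s) (hf : ContDiffOn ℝ 1 f s) :
    ContDiff ℝ 1 (fun z => χ z * f z) := by
  rw [contDiff_iff_contDiffAt]
  intro z
  by_cases hz : z ∈ s
  · exact hχ.contDiffAt.mul (hf.contDiffAt (hs.mem_nhds hz))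
  · have h0 : χ =ᶠ[nhds z] 0 := notMem_tsupport_iff_eventuallyEq.1 fun h => hz (hsupp h)
    refine (contDiffAt_const (c := (0 : ℝ))).congr_of_eventuallyEq ?_
    filter_upwards [h0] with w hw
    simp [hw]

lemma exists_bump_of_compact {K : Set ℂ} (hK : IsCompact K) (hKb : K ⊆ ball (0 : ℂ) 1) :
    ∃ χ : ℂ → ℝ, ContDiff ℝ 1 χ ∧ tsupport χ ⊆ ball (0 : ℂ) 1 ∧
      ∀ z ∈ K, χ =ᶠ[nhds z] 1 := by
  obtain ⟨r, ⟨hr0, hr1⟩, hr⟩ := exists_pos_lt_subset_ball one_pos hK.isClosed hKb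
  let χ : ContDiffBump (0 : ℂ) := ⟨r, (1 + r) / 2, hr0, by linarith⟩
  refine ⟨χ, χ.contDiff, ?_, fun z hz => χ.eventuallyEq_one_of_mem_ball (hr hz)⟩
  rw [χ.tsupport_eq]
  exact closedBall_subset_ball (show (1 + r) / 2 < 1 by linarith)

/-- Straightened form of Lemma 2.3: for the product lamination of `𝔻 × τ` by
the horizontal disks, every function which is `C¹` along the leaves with
transversally continuous leafwise derivative is a limit, in the leafwise `C¹`
topology on compact subsets, of restrictions of `C¹` functions of the ambient
space. -/
theorem approximation_product_lamination
    (τ : Set ℂ) (hτc : IsCompact τ)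
    (F : ℂ → ℂ → ℝ)
    (hFcont : ContinuousOn (fun p : ℂ × ℂ => F p.1 p.2) (ball (0 : ℂ) 1 ×ˢ τ))
    (hFdiff : ∀ α ∈ τ, ∀ z ∈ ball (0 : ℂ) 1,
      DifferentiableAt ℝ (fun z' => F z' α) z)
    (hFderiv : ContinuousOn (fun p : ℂ × ℂ => fderiv ℝ (fun z' => F z' p.2) p.1)
      (ball (0 : ℂ) 1 ×ˢ τ)) :
    ∀ K : Set ℂ, IsCompact K → K ⊆ ball (0 : ℂ) 1 →
      ∀ δ : ℝ, 0 < δ →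
        ∃ g : ℂ × ℂ → ℝ, ContDiff ℝ 1 g ∧
          (∀ z ∈ K, ∀ α ∈ τ, |F z α - g (z, α)| < δ) ∧
          (∀ z ∈ K, ∀ α ∈ τ,
            ‖fderiv ℝ (fun z' => F z' α) z -
              fderiv ℝ (fun z' => g (z', α)) z‖ < δ) := by
  intro K hK hKb δ hδ
  obtain ⟨χ, hχ, hχs, hχ1⟩ := exists_bump_of_compact hK hKb
  have hsub : K ×ˢ τ ⊆ ball (0 : ℂ) 1 ×ˢ τ := Set.prod_mono hKb le_rfl
  -- one modulus of continuity for `F` and its leafwise derivative on `K ×ˢ τ`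
  have huc := (hK.prod hτc).uniformContinuousOn_of_continuous
    ((hFcont.mono hsub).prodMk (hFderiv.mono hsub))
  obtain ⟨ε, hε, hεF⟩ := Metric.uniformContinuousOn_iff.1 huc δ hδ
  have hclose : ∀ z ∈ K, ∀ α ∈ τ, ∀ β ∈ τ, dist α β < ε →
      F z β ∈ ball (F z α) δ ∧
        fderiv ℝ (fun z' => F z' β) z ∈ ball (fderiv ℝ (fun z' => F z' α) z) δ := by
    intro z hz α hα β hβ hαβ
    have h := hεF (z, β) ⟨hz, hβ⟩ (z, α) ⟨hz, hα⟩ (by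
      rw [Prod.dist_eq, dist_self, dist_comm β α]
      exact max_lt hε hαβ)
    rw [Prod.dist_eq, max_lt_iff] at h
    exact h
  obtain ⟨t, htτ, htc⟩ := hτc.elim_nhds_subcover (fun β => ball β ε)
    fun β _ => ball_mem_nhds β hε
  obtain ⟨ρ, hρ⟩ := SmoothPartitionOfUnity.exists_isSubordinate
    (modelWithCornersSelf ℝ ℂ) hτc.isClosed (fun β : t => ball (β : ℂ) ε)
    (fun _ => isOpen_ball) (fun α hα => by simpa using htc hα)
  have hρd : ∀ β, ContDiff ℝ 1 (ρ β) := fun β => (ρ β).contMDiff.contDiff.of_le (by simp)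
  have hρε : ∀ (β : t) (α : ℂ), ρ β α ≠ 0 → dist α β < ε := fun β α h =>
    hρ β (subset_tsupport _ h)
  have hleaf : ∀ β ∈ τ, ContDiff ℝ 1 (fun z => χ z * F z β) := by
    intro β hβ
    refine contDiff_mul_of_tsupport_subset isOpen_ball hχ hχs ?_
    have h := (contDiffOn_succ_iff_fderiv_of_isOpen (𝕜 := ℝ) (n := 0)
      (f := fun z => F z β) (isOpen_ball (x := (0 : ℂ)) (ε := 1))).2
      ⟨fun z hz => (hFdiff β hβ z hz).differentiableWithinAt, by simp, contDiffOn_zero.2 <|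
        hFderiv.comp (f := fun z : ℂ => (z, β)) (by fun_prop) fun z hz => ⟨hz, hβ⟩⟩
    simpa using h
  have hleaf_eq : ∀ z ∈ K, ∀ β, (fun z' => χ z' * F z' β) =ᶠ[nhds z] fun z' => F z' β := by
    intro z hz β
    filter_upwards [hχ1 z hz] with w hw
    simp [hw]
  refine ⟨fun p => ∑ β : t, ρ β p.2 * (χ p.1 * F p.1 β), ?_, ?_, ?_⟩
  · exact ContDiff.sum fun β _ => ((hρd β).comp contDiff_snd).mul
      ((hleaf β (htτ β β.2)).comp contDiff_fst)
  · intro z hz α hα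
    have h := (convex_ball (F z α) δ).finsum_mem (fun β => ρ.nonneg β α) (ρ.sum_eq_one hα)
      (z := fun β : t => F z β)
      fun β hβ => (hclose z hz α hα β (htτ β β.2) (hρε β α hβ)).1
    rw [finsum_eq_sum_of_fintype, mem_ball', Real.dist_eq] at h
    simpa [(hχ1 z hz).self_of_nhds] using h
  · intro z hz α hα
    have h := (convex_ball (fderiv ℝ (fun z' => F z' α) z) δ).finsum_mem
      (fun β => ρ.nonneg β α) (ρ.sum_eq_one hα)
      (z := fun β : t => fderiv ℝ (fun z' => F z' β) z)
      fun β hβ => (hclose z hz α hα β (htτ β β.2) (hρε β α hβ)).2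
    rw [finsum_eq_sum_of_fintype, mem_ball', dist_eq_norm] at h
    have hd : fderiv ℝ (fun z' => ∑ β : t, ρ β α * (χ z' * F z' β)) z =
        ∑ β : t, ρ β α • fderiv ℝ (fun z' => F z' β) z := by
      have hdiff : ∀ β : t, DifferentiableAt ℝ (fun z' => χ z' * F z' β) z := fun β =>
        ((hleaf β (htτ β β.2)).differentiable one_ne_zero) z
      rw [fderiv_fun_sum fun β _ => (hdiff β).const_mul _]
      refine Finset.sum_congr rfl fun β _ => ?_
      rw [fderiv_const_mul (hdiff β), (hleaf_eq z hz β).fderiv_eq]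
    simpa only [hd] using h
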